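/- Let p be a prime, ν ∈ ℤ, and z ∈ ℚ_p with ord_p(z) < ν or z = 0. Then the limits μ_p(z,ν) = lim_{n→∞} F_n(z,ν) exist and are given by: (i) if z ∈ ℤ_p (including z = 0) and ν ≥ 1, then μ_p(z,ν) = 1/(p^ν + p^(ν−1)); (ii) if ord_p(z) = −λ < 0, then μ_p(z,ν) = 1/(p^(ν+2λ) + p^(ν+2λ−1)); (iii) for z = 0 and every ν ≥ 0, μ_p(0,−ν) = 1 − 1/(p^(ν+1) + p^ν). -/

import Mathlib

open Filter

/-- The generations of the Calkin–Wilf tree: `CW 0 = [1/1]` is the first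
generation, and each generation is obtained from the previous one by replacing
each entry `x` by `x/(x+1)` and `x+1`, in this order.  Thus the `n`-th
generation of the paper is `CW (n-1)`. -/
def CW : ℕ → List ℚ
  | 0 => [1]
  | n + 1 => (CW n).flatMap (fun x => [x / (x + 1), x + 1])

open scoped Classical in
/-- `FcwP p ν z (n-1) = F_n(z,ν) = 2^(1-n) · #{j : ord_p(x_j^(n) − z) ≥ ν}` is
the proportion of entries of the `n`-th generation of the Calkin–Wilf tree
(viewed in `ℚ_p`) lying in the ball `{u : ord_p(u − z) ≥ ν}`, the latter
condition being expressed via the `p`-adic norm as `‖u − z‖_p ≤ p^(−ν)`. -/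
noncomputable def FcwP (p : ℕ) [Fact p.Prime] (ν : ℤ) (z : ℚ_[p]) (n : ℕ) : ℝ :=
  ((CW n).countP (fun q => decide (‖(q : ℚ_[p]) - z‖ ≤ (p : ℝ) ^ (-ν)))) / 2 ^ n

namespace CWaux

def Rch {X : Type*} (A B : X → X) : ℕ → X → X → Prop
  | 0, x, y => x = y
  | n + 1, x, y => Rch A B n (A x) y ∨ Rch A B n (B x) y

noncomputable def T {X : Type*} (A B : X → X) (f : X → ℝ) : X → ℝ :=
  fun x => (f (A x) + f (B x)) / 2

section mix
variable {X : Type*} {A B : X → X}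

lemma Rch.trans {k l : ℕ} {x y z : X} (h1 : Rch A B k x y) (h2 : Rch A B l y z) :
    Rch A B (l + k) x z := by
  induction k generalizing x with
  | zero => cases h1; exact h2
  | succ k ih =>
    rcases h1 with h | h
    · exact Or.inl (ih h)
    · exact Or.inr (ih h)

lemma Rch.loop {o : X} (ho : A o = o) (k : ℕ) : Rch A B k o o := by
  induction k with
  | zero => rfl
  | succ k ih => left; rw [ho]; exact ih

lemma T_succ (f : X → ℝ) (k : ℕ) (x : X) :
    (T A B)^[k + 1] f x = ((T A B)^[k] f (A x) + (T A B)^[k] f (B x)) / 2 := by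
  rw [Function.iterate_succ_apply']; rfl

lemma T_le (f : X → ℝ) (M : ℝ) (h : ∀ x, f x ≤ M) (k : ℕ) (x : X) : (T A B)^[k] f x ≤ M := by
  induction k generalizing x with
  | zero => exact h x
  | succ k ih => rw [T_succ]; linarith [ih (A x), ih (B x)]

lemma le_T (f : X → ℝ) (M : ℝ) (h : ∀ x, M ≤ f x) (k : ℕ) (x : X) : M ≤ (T A B)^[k] f x := by
  induction k generalizing x with
  | zero => exact h x
  | succ k ih => rw [T_succ]; linarith [ih (A x), ih (B x)]

lemma T_strict (f : X → ℝ) (M : ℝ) (h : ∀ x, f x ≤ M) (k : ℕ) (x y : X) (hr : Rch A B k x y) :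
    (T A B)^[k] f x ≤ M - (M - f y) / 2 ^ k := by
  induction k generalizing x with
  | zero => cases hr; simp
  | succ k ih =>
    rw [T_succ]
    have e : (M - f y) / 2 ^ (k + 1) = (M - f y) / 2 ^ k / 2 := by rw [pow_succ, div_div]
    rw [e]
    rcases hr with hr | hr
    · linarith [ih _ hr, T_le (A := A) (B := B) f M h k (B x)]
    · linarith [ih _ hr, T_le (A := A) (B := B) f M h k (A x)]

variable [Fintype X]

lemma T_sum (hA : A.Bijective) (hB : B.Bijective) (f : X → ℝ) (n : ℕ) :
    ∑ x, (T A B)^[n] f x = ∑ x, f x := by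
  induction n with
  | zero => rfl
  | succ n ih =>
    simp_rw [T_succ]
    rw [← Finset.sum_div, Finset.sum_add_distrib, hA.sum_comp (fun x => (T A B)^[n] f x),
      hB.sum_comp (fun x => (T A B)^[n] f x), ih]
    ring

lemma osc_step [Nonempty X] (K : ℕ) (hK : ∀ x y, Rch A B K x y) (f : X → ℝ) (c : ℝ)
    (hc : ∀ x y, f x - f y ≤ c) (x y : X) :
    (T A B)^[K] f x - (T A B)^[K] f y ≤ c * (1 - 1 / 2 ^ K) := by
  obtain ⟨x0, hx0⟩ := Finite.exists_max f
  obtain ⟨y0, hy0⟩ := Finite.exists_min f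
  have h1 := T_strict f _ hx0 K x y0 (hK _ _)
  have h2 := le_T (A := A) (B := B) f _ hy0 K y
  have h3 : (f x0 - f y0) * (1 - 1 / 2 ^ K) ≤ c * (1 - 1 / 2 ^ K) := by
    apply mul_le_mul_of_nonneg_right (hc _ _)
    have : (1 : ℝ) / 2 ^ K ≤ 1 := by
      rw [div_le_one (by positivity)]; exact one_le_pow₀ (by norm_num)
    linarith
  have h4 : (f x0 - f y0) * (1 - 1 / 2 ^ K) = (f x0 - f y0) - (f x0 - f y0) / 2 ^ K := by ring
  linarith

lemma osc_iter [Nonempty X] (K : ℕ) (hK : ∀ x y, Rch A B K x y) (f : X → ℝ) (c : ℝ)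
    (hc : ∀ x y, f x - f y ≤ c) (j : ℕ) (x y : X) :
    (T A B)^[K * j] f x - (T A B)^[K * j] f y ≤ c * (1 - 1 / 2 ^ K) ^ j := by
  induction j generalizing x y with
  | zero => simpa using hc x y
  | succ j ih =>
    have := osc_step K hK _ _ ih x y
    rw [Nat.mul_succ, Nat.add_comm, Function.iterate_add_apply, pow_succ, ← mul_assoc]
    exact this

lemma mixing [Nonempty X] (hA : A.Bijective) (hB : B.Bijective) (o : X) (ho : A o = o)
    (h1 : ∀ x, ∃ k, Rch A B k x o) (h2 : ∀ x, ∃ k, Rch A B k o x) (f : X → ℝ) (x : X) :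
    Filter.Tendsto (fun n => (T A B)^[n] f x) Filter.atTop
      (nhds ((∑ y, f y) / Fintype.card X)) := by
  obtain ⟨K, hK0, hK⟩ : ∃ K, 0 < K ∧ ∀ x y, Rch A B K x y := by
    choose k hk using h1
    choose l hl using h2
    refine ⟨∑ x, l x + (1 + ∑ x, k x), by omega, fun x y => ?_⟩
    have a1 : k x ≤ ∑ x, k x := Finset.single_le_sum (f := k) (by simp) (Finset.mem_univ x)
    have a2 : l y ≤ ∑ x, l x := Finset.single_le_sum (f := l) (by simp) (Finset.mem_univ y)
    have := ((hk x).trans (Rch.loop ho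
      ((∑ x, l x + (1 + ∑ x, k x)) - l y - k x))).trans (hl y)
    convert this using 1
    omega
  obtain ⟨x0, hx0⟩ := Finite.exists_max f
  obtain ⟨y0, hy0⟩ := Finite.exists_min f
  set c := f x0 - f y0
  have hc : ∀ x y, f x - f y ≤ c := fun x y => by linarith [hx0 x, hy0 y]
  set r : ℝ := 1 - 1 / 2 ^ K
  have hr0 : 0 ≤ r := by
    have : (1 : ℝ) / 2 ^ K ≤ 1 := by
      rw [div_le_one (by positivity)]; exact one_le_pow₀ (by norm_num)
    linarith
  have hr1 : r < 1 := by
    have : (0 : ℝ) < 1 / 2 ^ K := by positivity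
    linarith
  have key : ∀ n x y, (T A B)^[n] f x - (T A B)^[n] f y ≤ c * r ^ (n / K) := by
    intro n x y
    have e : n = n % K + K * (n / K) := (Nat.mod_add_div n K).symm
    rw [e, Function.iterate_add_apply, ← e]
    set g := (T A B)^[K * (n / K)] f
    have ho := osc_iter K hK f c hc (n / K)
    obtain ⟨x1, hx1⟩ := Finite.exists_max g
    obtain ⟨y1, hy1⟩ := Finite.exists_min g
    linarith [T_le (A := A) (B := B) g _ hx1 (n % K) x, le_T (A := A) (B := B) g _ hy1 (n % K) y,
      ho x1 y1]
  have hlim : Filter.Tendsto (fun n : ℕ => c * r ^ (n / K)) Filter.atTop (nhds 0) := by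
    have := ((tendsto_pow_atTop_nhds_zero_of_lt_one hr0 hr1).comp
      (Nat.tendsto_div_const_atTop hK0.ne')).const_mul c
    simpa using this
  rw [tendsto_iff_norm_sub_tendsto_zero]
  refine squeeze_zero (fun _ => norm_nonneg _) (fun n => ?_) hlim
  have hcard : (0 : ℝ) < Fintype.card X := by exact_mod_cast Fintype.card_pos
  rw [← T_sum hA hB f n, Real.norm_eq_abs, abs_le]
  have u1 : (∑ y, (T A B)^[n] f y) ≤ Fintype.card X * ((T A B)^[n] f x + c * r ^ (n / K)) := by
    rw [← nsmul_eq_mul, ← Finset.card_univ]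
    exact Finset.sum_le_card_nsmul _ _ _ (fun y _ => by linarith [key n y x])
  have u2 : Fintype.card X * ((T A B)^[n] f x - c * r ^ (n / K)) ≤ (∑ y, (T A B)^[n] f y) := by
    rw [← nsmul_eq_mul, ← Finset.card_univ]
    exact Finset.card_nsmul_le_sum _ _ _ (fun y _ => by linarith [key n x y])
  constructor
  · have := (div_le_iff₀' hcard).2 u1
    linarith
  · have := (le_div_iff₀' hcard).2 u2
    linarith

end mix

open scoped Classical in
lemma FcwP_eq (p : ℕ) [Fact p.Prime] (ν : ℤ) (z : ℚ_[p]) (n : ℕ) :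
    FcwP p ν z n =
      ((CW n).countP (fun q : ℚ => decide (‖(q : ℚ_[p]) - z‖ ≤ (p : ℝ) ^ (-ν))) : ℝ) / 2 ^ n := by
  unfold FcwP
  have h : (do let a ← CW n; pure (a : ℚ_[p])) = (CW n).map (fun a : ℚ => (a : ℚ_[p])) :=
    List.map_eq_flatMap.symm
  rw [h, List.countP_map]
  rfl

section walk

variable (p : ℕ) [Fact p.Prime] (N : ℕ)

abbrev R := ZMod (p ^ N)
abbrev X := {v : R p N × R p N // IsCoprime v.1 v.2}

def mA (v : X p N) : X p N := ⟨(v.1.1, v.1.1 + v.1.2), by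
  have := v.2.add_mul_left_right 1
  simpa [add_comm] using this⟩
def mB (v : X p N) : X p N := ⟨(v.1.1 + v.1.2, v.1.2), by
  have := v.2.add_mul_left_left 1
  simpa using this⟩

instance : NeZero (p ^ N) := ⟨pow_ne_zero _ (Fact.out : p.Prime).ne_zero⟩

noncomputable instance : Fintype (X p N) := Fintype.ofFinite _

lemma mA_bij : (mA p N).Bijective := by
  rw [← Finite.injective_iff_bijective]
  rintro ⟨⟨a, b⟩, h⟩ ⟨⟨c, d⟩, h'⟩ e
  simp only [mA, Subtype.mk.injEq, Prod.mk.injEq] at e ⊢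
  obtain ⟨e1, e2⟩ := e
  subst e1
  simpa using e2

lemma mB_bij : (mB p N).Bijective := by
  rw [← Finite.injective_iff_bijective]
  rintro ⟨⟨a, b⟩, h⟩ ⟨⟨c, d⟩, h'⟩ e
  simp only [mB, Subtype.mk.injEq, Prod.mk.injEq] at e ⊢
  obtain ⟨e1, e2⟩ := e
  subst e2
  simpa using e1

def E (x y : X p N) : Prop := ∃ k, Rch (mA p N) (mB p N) k x y

variable {p N}

lemma E.trans {x y z : X p N} (h : E p N x y) (h' : E p N y z) : E p N x z := by
  obtain ⟨k, hk⟩ := h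
  obtain ⟨l, hl⟩ := h'
  exact ⟨_, hk.trans hl⟩

lemma E_A (i : ℕ) (x y : X p N) (h1 : y.1.1 = x.1.1) (h2 : y.1.2 = x.1.2 + i * x.1.1) :
    E p N x y := by
  induction i generalizing x with
  | zero =>
    refine ⟨0, ?_⟩
    apply Subtype.ext
    apply Prod.ext
    · exact h1.symm
    · simpa using h2.symm
  | succ i ih =>
    have h3 : E p N x (mA p N x) := ⟨1, Or.inl rfl⟩
    refine h3.trans (ih _ h1 ?_)
    rw [h2]; simp only [mA]; push_cast; ring

lemma E_B (i : ℕ) (x y : X p N) (h1 : y.1.2 = x.1.2) (h2 : y.1.1 = x.1.1 + i * x.1.2) :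
    E p N x y := by
  induction i generalizing x with
  | zero =>
    refine ⟨0, ?_⟩
    apply Subtype.ext
    apply Prod.ext
    · simpa using h2.symm
    · exact h1.symm
  | succ i ih =>
    have h3 : E p N x (mB p N x) := ⟨1, Or.inr rfl⟩
    refine h3.trans (ih _ h1 ?_)
    rw [h2]; simp only [mB]; push_cast; ring

lemma E_A' (t : R p N) (x y : X p N) (h1 : y.1.1 = x.1.1) (h2 : y.1.2 = x.1.2 + t * x.1.1) :
    E p N x y := E_A t.val x y h1 (by rw [ZMod.natCast_zmod_val]; exact h2)

lemma E_B' (t : R p N) (x y : X p N) (h1 : y.1.2 = x.1.2) (h2 : y.1.1 = x.1.1 + t * x.1.2) :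
    E p N x y := E_B t.val x y h1 (by rw [ZMod.natCast_zmod_val]; exact h2)

lemma unit_or [NeZero N] {a b : R p N} (h : IsCoprime a b) : IsUnit a ∨ IsUnit b := by
  haveI : Fact (1 < p ^ N) := ⟨Nat.one_lt_pow (NeZero.ne N) (Fact.out : p.Prime).one_lt⟩
  haveI : IsLocalRing (R p N) :=
    IsLocalRing.of_surjective' (PadicInt.toZModPow (p := p) N) (ZMod.ringHom_surjective _)
  obtain ⟨u, v, e⟩ := h
  rcases IsLocalRing.isUnit_or_isUnit_of_add_one e with h | h
  · exact Or.inl (isUnit_of_mul_isUnit_right h)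
  · exact Or.inr (isUnit_of_mul_isUnit_right h)

variable (p N) in
def oo : X p N := ⟨(0, 1), isCoprime_one_right⟩

lemma to_o [NeZero N] (x : X p N) : E p N x (oo p N) := by
  have key : ∀ x : X p N, IsUnit x.1.1 → E p N x (oo p N) := by
    rintro ⟨⟨a, b⟩, h⟩ ha
    obtain ⟨c, hc⟩ := ha.exists_left_inv
    simp only at hc
    refine (E_A' ((1 - b) * c) ⟨(a, b), h⟩ ⟨(a, 1), isCoprime_one_right⟩ rfl ?_).trans
      (E_B' (-a) _ (oo p N) rfl ?_)
    · simp only; rw [mul_assoc, hc]; ring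
    · simp [oo]
  rcases unit_or x.2 with h | h
  · exact key x h
  · obtain ⟨⟨a, b⟩, hx⟩ := x
    obtain ⟨c, hc⟩ := h.exists_left_inv
    simp only at hc
    refine (E_B' ((1 - a) * c) ⟨(a, b), hx⟩ ⟨(1, b), isCoprime_one_left⟩ rfl ?_).trans (key _ isUnit_one)
    simp only; rw [mul_assoc, hc]; ring

lemma from_o [NeZero N] (x : X p N) : E p N (oo p N) x := by
  have key : ∀ x : X p N, IsUnit x.1.1 → E p N (oo p N) x := by
    rintro ⟨⟨a, b⟩, h⟩ ha
    obtain ⟨c, hc⟩ := ha.exists_left_inv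
    simp only at hc
    refine (E_B' a (oo p N) ⟨(a, 1), isCoprime_one_right⟩ rfl ?_).trans
      (E_A' ((b - 1) * c) _ ⟨(a, b), h⟩ rfl ?_)
    · simp [oo]
    · simp only; rw [mul_assoc, hc]; ring
  rcases unit_or x.2 with h | h
  · exact key x h
  · obtain ⟨⟨a, b⟩, hx⟩ := x
    obtain ⟨c, hc⟩ := h.exists_left_inv
    simp only at hc
    refine (key ⟨(1, b), isCoprime_one_left⟩ isUnit_one).trans (E_B' ((a - 1) * c) _ ⟨(a, b), hx⟩ rfl ?_)
    simp only; rw [mul_assoc, hc]; ring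

instance : Nonempty (X p N) := ⟨oo p N⟩

lemma walk_lim [NeZero N] (f : X p N → ℝ) (x : X p N) :
    Filter.Tendsto (fun n => (T (mA p N) (mB p N))^[n] f x) Filter.atTop
      (nhds ((∑ y, f y) / Fintype.card (X p N))) :=
  mixing (mA_bij p N) (mB_bij p N) (oo p N) (by simp [mA, oo]) to_o from_o f x

variable (p N) in
def red (q : ℚ) : X p N := ⟨((q.num : R p N), (q.den : R p N)), by
  have := q.isCoprime_num_den.map (Int.castRingHom (R p N))
  simpa using this⟩

lemma CW_pos (n : ℕ) : ∀ q ∈ CW n, 0 < q := by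
  induction n with
  | zero => simp [CW]
  | succ n ih =>
    intro q hq
    simp only [CW, List.mem_flatMap, List.mem_cons, List.not_mem_nil, or_false] at hq
    obtain ⟨x, hx, rfl | rfl⟩ := hq
    · have := ih x hx; positivity
    · have := ih x hx; positivity

lemma num_den_A (q : ℚ) (hq : 0 < q) :
    (q / (q + 1)).num = q.num ∧ ((q / (q + 1)).den : ℤ) = q.num + q.den := by
  have hn : 0 < q.num := Rat.num_pos.2 hq
  have hd : (0 : ℤ) < q.den := by exact_mod_cast q.pos
  have e : q / (q + 1) = (q.num : ℚ) / ((q.num + q.den : ℤ) : ℚ) := by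
    have hd' : (q.den : ℚ) ≠ 0 := by exact_mod_cast q.pos.ne'
    have h3 : (q.num : ℚ) = q.den * q := by
      rw [mul_comm, Rat.mul_den_eq_num]
    have h2 : ((q.num + q.den : ℤ) : ℚ) = q.den * (q + 1) := by
      push_cast
      rw [h3]; ring
    rw [h2, h3, mul_div_mul_left _ _ hd']
  have hc : Nat.Coprime q.num.natAbs (q.num + q.den : ℤ).natAbs := by
    rw [← Int.isCoprime_iff_nat_coprime]
    have := q.isCoprime_num_den.add_mul_left_right 1
    simpa [add_comm] using this
  rw [e]
  exact ⟨Rat.num_div_eq_of_coprime (by omega) hc, Rat.den_div_eq_of_coprime (by omega) hc⟩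

lemma num_den_B (q : ℚ) :
    (q + 1).num = q.num + q.den ∧ ((q + 1).den : ℤ) = q.den := by
  have hd : (0 : ℤ) < q.den := by exact_mod_cast q.pos
  have e : q + 1 = ((q.num + q.den : ℤ) : ℚ) / ((q.den : ℤ) : ℚ) := by
    have hd' : (q.den : ℚ) ≠ 0 := by exact_mod_cast q.pos.ne'
    push_cast
    rw [add_div, div_self hd', Rat.num_div_den]
  have hc : Nat.Coprime (q.num + q.den : ℤ).natAbs (q.den : ℤ).natAbs := by
    rw [← Int.isCoprime_iff_nat_coprime]
    have := q.isCoprime_num_den.add_mul_left_left 1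
    simpa using this
  rw [e]
  exact ⟨Rat.num_div_eq_of_coprime (by omega) hc, Rat.den_div_eq_of_coprime (by omega) hc⟩

lemma red_A (q : ℚ) (hq : 0 < q) : red p N (q / (q + 1)) = mA p N (red p N q) := by
  obtain ⟨h1, h2⟩ := num_den_A q hq
  apply Subtype.ext
  apply Prod.ext
  · simp [red, mA, h1]
  · have := congrArg (Int.cast : ℤ → R p N) h2
    simpa [red, mA] using this

lemma red_B (q : ℚ) : red p N (q + 1) = mB p N (red p N q) := by
  obtain ⟨h1, h2⟩ := num_den_B q
  apply Subtype.ext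
  apply Prod.ext
  · simp [red, mB, h1]
  · have := congrArg (Int.cast : ℤ → R p N) h2
    simpa [red, mB] using this

lemma CW_sum (n : ℕ) (f : X p N → ℝ) :
    ((CW n).map (fun q => f (red p N q))).sum
      = 2 ^ n * (T (mA p N) (mB p N))^[n] f (red p N 1) := by
  induction n generalizing f with
  | zero => simp [CW]
  | succ n ih =>
    have h : ∀ L : List ℚ, (∀ q ∈ L, 0 < q) →
        ((L.flatMap (fun x => [x / (x + 1), x + 1])).map (fun q => f (red p N q))).sum
        = 2 * (L.map (fun q => T (mA p N) (mB p N) f (red p N q))).sum := by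
      intro L hL
      induction L with
      | nil => simp
      | cons q L ihL =>
        have hq := hL q (by simp)
        have := ihL (fun r hr => hL r (by simp [hr]))
        simp only [List.flatMap_cons, List.map_append, List.sum_append, this, List.map_cons,
          List.map_nil, List.sum_cons, List.sum_nil, red_A q hq, red_B, T]
        ring
    rw [CW, h _ (CW_pos n), ih, Function.iterate_succ_apply]
    ring

open scoped Classical in
lemma countP_lim [NeZero N] (P : ℚ → Prop) (Q : X p N → Prop)
    (hPQ : ∀ q : ℚ, 0 < q → (P q ↔ Q (red p N q))) :
    Filter.Tendsto (fun n => ((CW n).countP (fun q => decide (P q)) : ℝ) / 2 ^ n) Filter.atTop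
      (nhds ((Fintype.card {x : X p N // Q x} : ℝ) / Fintype.card (X p N))) := by
  have h := walk_lim (p := p) (N := N) (fun x => if Q x then 1 else 0) (red p N 1)
  have e : (∑ y : X p N, (if Q y then (1 : ℝ) else 0)) = Fintype.card {x : X p N // Q x} := by
    rw [Finset.sum_boole, Fintype.card_subtype]
  rw [e] at h
  refine h.congr (fun n => ?_)
  rw [eq_div_iff (by positivity), mul_comm, ← CW_sum]
  have : ∀ L : List ℚ, (∀ q ∈ L, 0 < q) →
      (L.map (fun q => if Q (red p N q) then (1 : ℝ) else 0)).sum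
        = (L.countP (fun q => decide (P q)) : ℝ) := by
    intro L hL
    induction L with
    | nil => simp
    | cons q L ih =>
      have hq := hPQ q (hL q (by simp))
      have := ih (fun r hr => hL r (by simp [hr]))
      rw [List.map_cons, List.sum_cons, this, List.countP_cons]
      by_cases hP : P q
      · simp [hP, hq.1 hP, add_comm]
      · have : ¬ Q (red p N q) := fun h => hP (hq.2 h)
        simp [hP, this]
  exact this _ (CW_pos n)

lemma card_units [NeZero N] : Fintype.card (R p N)ˣ = p ^ (N - 1) * (p - 1) := by
  rw [ZMod.card_units_eq_totient, Nat.totient_prime_pow Fact.out (Nat.pos_of_ne_zero (NeZero.ne N))]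

open scoped Classical in
lemma card_X [NeZero N] :
    (Fintype.card (X p N) : ℝ) = (p ^ (N - 1) * (p - 1)) * (p ^ N + p ^ (N - 1)) := by
  have hu : (Finset.univ.filter (fun a : R p N => IsUnit a)).card = p ^ (N - 1) * (p - 1) := by
    rw [← card_units (p := p) (N := N), ← Fintype.card_subtype]
    symm
    refine Fintype.card_congr (Equiv.ofBijective (fun u : (R p N)ˣ => ⟨(u : R p N), u.isUnit⟩)
      ⟨fun u v h => Units.ext (congrArg Subtype.val h), ?_⟩)
    rintro ⟨_, u, rfl⟩
    exact ⟨u, rfl⟩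
  have h1 := Finset.card_filter_add_card_filter_not (s := Finset.univ) (fun a : R p N => IsUnit a)
  rw [hu, Finset.card_univ, ZMod.card] at h1
  have h2 := Finset.card_filter_add_card_filter_not (s := Finset.univ)
    (fun v : R p N × R p N => IsCoprime v.1 v.2)
  have h3 : (Finset.univ.filter (fun v : R p N × R p N => ¬ IsCoprime v.1 v.2))
      = (Finset.univ.filter (fun a : R p N => ¬ IsUnit a)) ×ˢ
        (Finset.univ.filter (fun a : R p N => ¬ IsUnit a)) := by
    ext ⟨a, b⟩
    simp only [Finset.mem_filter, Finset.mem_univ, true_and, Finset.mem_product]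
    rw [← not_or, not_iff_not]
    refine ⟨unit_or, ?_⟩
    rintro (h | h)
    · obtain ⟨c, hc⟩ := h.exists_left_inv
      exact ⟨c, 0, by simp [hc]⟩
    · obtain ⟨c, hc⟩ := h.exists_left_inv
      exact ⟨0, c, by simp [hc]⟩
  rw [h3, Finset.card_product, Finset.card_univ, Fintype.card_prod, ZMod.card] at h2
  have h4 : Fintype.card (X p N) =
      (Finset.univ.filter (fun v : R p N × R p N => IsCoprime v.1 v.2)).card := by
    rw [← Fintype.card_subtype]
  rw [h4]
  have hp : 1 ≤ p := (Fact.out : p.Prime).one_le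
  have h1' := congrArg (Nat.cast : ℕ → ℝ) h1
  have h2' := congrArg (Nat.cast : ℕ → ℝ) h2
  push_cast [Nat.cast_sub hp] at h1' h2'
  have hN : (p : ℝ) ^ N = p ^ (N - 1) * p := by
    rw [← pow_succ, Nat.sub_add_cancel (Nat.pos_of_ne_zero (NeZero.ne N))]
  set s := ((Finset.univ.filter (fun a : R p N => ¬ IsUnit a)).card : ℝ)
  have hs : s = p ^ (N - 1) := by rw [hN] at h1'; linarith
  rw [hs, hN] at h2'
  rw [hN]
  linarith

open scoped Classical in
lemma card_Q1 (w : R p N) [Fintype {x : X p N // x.1.1 = w * x.1.2}] :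
    Fintype.card {x : X p N // x.1.1 = w * x.1.2} = Fintype.card (R p N)ˣ := by
  symm
  refine Fintype.card_congr (Equiv.ofBijective
    (fun u => ⟨⟨(w * u, u), ?_⟩, rfl⟩) ⟨?_, ?_⟩)
  · exact ⟨0, (u⁻¹ : (R p N)ˣ), by simp⟩
  · intro u v h
    exact Units.ext (congrArg (fun x => x.1.1.2) h)
  · rintro ⟨⟨⟨a, b⟩, h⟩, h'⟩
    simp only at h'
    subst h'
    have hb : IsUnit b := by
      rw [← isCoprime_self]; exact h.of_mul_left_right
    obtain ⟨u, rfl⟩ := hb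
    exact ⟨u, rfl⟩

open scoped Classical in
lemma card_Q2 (w : R p N) [Fintype {x : X p N // x.1.2 = w * x.1.1}] :
    Fintype.card {x : X p N // x.1.2 = w * x.1.1} = Fintype.card (R p N)ˣ := by
  symm
  refine Fintype.card_congr (Equiv.ofBijective
    (fun u => ⟨⟨(u, w * u), ?_⟩, rfl⟩) ⟨?_, ?_⟩)
  · exact ⟨(u⁻¹ : (R p N)ˣ), 0, by simp⟩
  · intro u v h
    exact Units.ext (congrArg (fun x => x.1.1.1) h)
  · rintro ⟨⟨⟨a, b⟩, h⟩, h'⟩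
    simp only at h'
    subst h'
    have hb : IsUnit a := by
      rw [← isCoprime_self]; exact h.of_mul_right_right
    obtain ⟨u, rfl⟩ := hb
    exact ⟨u, rfl⟩

lemma ratio [NeZero N] : (Fintype.card (R p N)ˣ : ℝ) / Fintype.card (X p N)
    = 1 / ((p : ℝ) ^ N + (p : ℝ) ^ (N - 1)) := by
  have hp : 1 < p := (Fact.out : p.Prime).one_lt
  have hp' : (1 : ℝ) < p := by exact_mod_cast hp
  rw [card_X, card_units]
  push_cast [Nat.cast_sub hp.le]
  have : (p : ℝ) - 1 ≠ 0 := by linarith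
  have : (p : ℝ) ^ N + (p : ℝ) ^ (N - 1) ≠ 0 := by positivity
  field_simp

/-- the arithmetic core: the ball condition for a reduced fraction -/
lemma ball_iff [NeZero N] (a b : ℤ) (hab : IsCoprime a b) (hb : b ≠ 0) (w : ℤ_[p]) :
    ‖(a : ℚ_[p]) / b - w‖ ≤ (p : ℝ) ^ (-(N : ℤ)) ↔
      (a : R p N) = PadicInt.toZModPow N w * (b : R p N) := by
  have hp : 1 < p := (Fact.out : p.Prime).one_lt
  have hp' : (1 : ℝ) < p := by exact_mod_cast hp
  have hb' : (b : ℚ_[p]) ≠ 0 := by exact_mod_cast hb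
  have hsmall : (p : ℝ) ^ (-(N : ℤ)) < 1 := by
    rw [zpow_neg, zpow_natCast]
    exact inv_lt_one_of_one_lt₀ (one_lt_pow₀ hp' (NeZero.ne N))
  have e1 : (a : R p N) = PadicInt.toZModPow N w * (b : R p N) ↔
      ‖(a : ℚ_[p]) - w * b‖ ≤ (p : ℝ) ^ (-(N : ℤ)) := by
    have h := PadicInt.norm_le_pow_iff_mem_span_pow ((a : ℤ_[p]) - w * (b : ℤ_[p])) N
    rw [← PadicInt.ker_toZModPow, RingHom.mem_ker, map_sub, map_mul, map_intCast, map_intCast,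
      sub_eq_zero, PadicInt.norm_def] at h
    rw [← h]
    push_cast
    rfl
  rw [e1]
  have e2 : (a : ℚ_[p]) - w * b = (a / b - w) * b := by field_simp
  have hbn : ‖(b : ℚ_[p])‖ = 1 → (‖(a : ℚ_[p]) / b - w‖ ≤ (p : ℝ) ^ (-(N : ℤ)) ↔
      ‖(a : ℚ_[p]) - w * b‖ ≤ (p : ℝ) ^ (-(N : ℤ))) := by
    intro h; rw [e2, norm_mul, h, mul_one]
  by_cases h : ‖(b : ℚ_[p])‖ = 1
  · exact hbn h
  have hlt : ‖(b : ℚ_[p])‖ < 1 := lt_of_le_of_ne (Padic.norm_int_le_one b) h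
  have ha : ‖(a : ℚ_[p])‖ = 1 := by
    by_contra h'
    have hlt' : ‖(a : ℚ_[p])‖ < 1 := lt_of_le_of_ne (Padic.norm_int_le_one a) h'
    rw [Padic.norm_intCast_lt_one_iff] at hlt hlt'
    have := hab.isUnit_of_dvd' hlt' hlt
    rw [Int.isUnit_iff] at this
    omega
  constructor
  · intro hh
    exfalso
    have h1 : ‖(a : ℚ_[p]) / b‖ ≤ 1 := by
      have : (a : ℚ_[p]) / b = (a / b - w) + w := by ring
      rw [this]
      refine (Padic.nonarchimedean _ _).trans (max_le (hh.trans hsmall.le) w.2)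
    rw [norm_div, ha, div_le_one (norm_pos_iff.2 hb')] at h1
    linarith
  · intro hh
    exfalso
    have h1 : ‖(a : ℚ_[p])‖ < 1 := by
      have : (a : ℚ_[p]) = (a - w * b) + w * b := by ring
      rw [this]
      refine (Padic.nonarchimedean _ _).trans_lt (max_lt (hh.trans_lt hsmall) ?_)
      rw [norm_mul]
      exact (mul_le_of_le_one_left (norm_nonneg _) w.2).trans_lt hlt
    linarith

lemma ball1 [NeZero N] (q : ℚ) (w : ℤ_[p]) :
    ‖(q : ℚ_[p]) - w‖ ≤ (p : ℝ) ^ (-(N : ℤ)) ↔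
      (red p N q).1.1 = PadicInt.toZModPow N w * (red p N q).1.2 := by
  have := ball_iff (p := p) (N := N) q.num q.den q.isCoprime_num_den
    (by exact_mod_cast q.pos.ne') w
  rw [Rat.cast_def]
  simpa [red] using this

lemma ball2 [NeZero N] (q : ℚ) (hq : 0 < q) (w : ℤ_[p]) :
    ‖(q : ℚ_[p])⁻¹ - w‖ ≤ (p : ℝ) ^ (-(N : ℤ)) ↔
      (red p N q).1.2 = PadicInt.toZModPow N w * (red p N q).1.1 := by
  have := ball_iff (p := p) (N := N) q.den q.num q.isCoprime_num_den.symm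
    (Rat.num_pos.2 hq).ne' w
  rw [Rat.cast_def, inv_div]
  simpa [red] using this

lemma inv_ball (u z : ℚ_[p]) (hz : z ≠ 0) (r : ℝ) (hr : r < ‖z‖) (h : ‖u - z‖ ≤ r) :
    ‖u‖ = ‖z‖ ∧ ‖u⁻¹ - z⁻¹‖ ≤ r / ‖z‖ ^ 2 := by
  have h1 : ‖u‖ = ‖z‖ := by
    have : u = (u - z) + z := by ring
    rw [this, Padic.add_eq_max_of_ne (h.trans_lt hr).ne, max_eq_right (h.trans hr.le)]
  have hz' : 0 < ‖z‖ := norm_pos_iff.2 hz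
  have hu : u ≠ 0 := by rw [← norm_pos_iff, h1]; exact hz'
  refine ⟨h1, ?_⟩
  have : u⁻¹ - z⁻¹ = -(u - z) / (u * z) := by field_simp; ring
  rw [this, norm_div, norm_neg, norm_mul, h1, ← sq]
  gcongr

end walk
end CWaux

/-- Limits `μ_p(z,ν) = lim_n F_n(z,ν)` of the `p`-adic distribution of the
Calkin–Wilf tree, for `z ∈ ℚ_p` with `ord_p(z) < ν` or `z = 0`:
(i) if `z` is a `p`-adic integer (including `z = 0`) and `ν ≥ 1`, then
`μ_p(z,ν) = 1/(p^ν + p^(ν−1))`;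
(ii) if `ord_p(z) = −λ < 0`, then `μ_p(z,ν) = 1/(p^(ν+2λ) + p^(ν+2λ−1))`;
(iii) for `z = 0` and every `ν ≥ 0`, `μ_p(0,−ν) = 1 − 1/(p^(ν+1) + p^ν)`. -/
theorem calkin_wilf_padic_distribution (p : ℕ) [Fact p.Prime] :
    (∀ (ν : ℤ), 1 ≤ ν → ∀ z : ℚ_[p], ‖z‖ ≤ 1 → (z = 0 ∨ z.valuation < ν) →
      Tendsto (FcwP p ν z) atTop
        (nhds (1 / ((p : ℝ) ^ ν + (p : ℝ) ^ (ν - 1))))) ∧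
    (∀ (ν lam : ℤ), 0 < lam → ∀ z : ℚ_[p], z ≠ 0 → z.valuation = -lam →
      z.valuation < ν →
      Tendsto (FcwP p ν z) atTop
        (nhds (1 / ((p : ℝ) ^ (ν + 2 * lam) + (p : ℝ) ^ (ν + 2 * lam - 1))))) ∧
    (∀ ν : ℤ, 0 ≤ ν →
      Tendsto (FcwP p (-ν) (0 : ℚ_[p])) atTop
        (nhds (1 - 1 / ((p : ℝ) ^ (ν + 1) + (p : ℝ) ^ ν)))) := by
  have hp : 1 < p := (Fact.out : p.Prime).one_lt
  have hp' : (1 : ℝ) < p := by exact_mod_cast hp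
  have hp0 : (p : ℝ) ≠ 0 := by positivity
  refine ⟨?_, ?_, ?_⟩
  · intro ν hν z hz _
    lift ν to ℕ using by omega
    haveI : NeZero ν := ⟨by omega⟩
    have h := CWaux.countP_lim (p := p) (N := ν)
      (fun q => ‖(q : ℚ_[p]) - z‖ ≤ (p : ℝ) ^ (-(ν : ℤ)))
      (fun x => x.1.1 = PadicInt.toZModPow ν ⟨z, hz⟩ * x.1.2)
      (fun q _ => CWaux.ball1 q ⟨z, hz⟩)
    rw [CWaux.card_Q1, CWaux.ratio] at h
    have e : ((ν : ℤ) - 1) = ((ν - 1 : ℕ) : ℤ) := by omega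
    rw [e, zpow_natCast, zpow_natCast]
    refine Tendsto.congr (fun n => ?_) h
    rw [CWaux.FcwP_eq]
    all_goals congr!
  · intro ν lam hl z hz hval hlt
    obtain ⟨N, hN⟩ : ∃ N : ℕ, (N : ℤ) = ν + 2 * lam := ⟨(ν + 2 * lam).toNat, by omega⟩
    haveI : NeZero N := ⟨by omega⟩
    have hnz : ‖z‖ = (p : ℝ) ^ lam := by
      rw [Padic.norm_eq_zpow_neg_valuation hz, hval, neg_neg]
    have hnz' : ‖z⁻¹‖ = (p : ℝ) ^ (-lam) := by rw [norm_inv, hnz, zpow_neg]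
    have hw : ‖z⁻¹‖ ≤ 1 := by
      rw [hnz']; exact zpow_le_one_of_nonpos₀ hp'.le (by omega)
    have h := CWaux.countP_lim (p := p) (N := N)
      (fun q => ‖(q : ℚ_[p]) - z‖ ≤ (p : ℝ) ^ (-ν))
      (fun x => x.1.2 = PadicInt.toZModPow N ⟨z⁻¹, hw⟩ * x.1.1)
      (fun q hq => ?_)
    rotate_left
    · rw [← CWaux.ball2 q hq ⟨z⁻¹, hw⟩]
      constructor
      · intro h
        refine (CWaux.inv_ball _ z hz _ ?_ h).2.trans_eq ?_
        · rw [hnz]; exact zpow_lt_zpow_right₀ hp' (by omega)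
        · rw [hnz, ← zpow_natCast, ← zpow_mul, ← zpow_sub₀ hp0, hN]
          congr 1; push_cast; ring
      · intro h
        have h2 := (CWaux.inv_ball _ z⁻¹ (inv_ne_zero hz) _ ?_ h).2
        · rw [inv_inv, inv_inv] at h2
          refine h2.trans_eq ?_
          rw [hnz', ← zpow_natCast, ← zpow_mul, ← zpow_sub₀ hp0, hN]
          congr 1; push_cast; ring
        · rw [hnz']; exact zpow_lt_zpow_right₀ hp' (by omega)
    rw [CWaux.card_Q2, CWaux.ratio] at h
    have e : (ν + 2 * lam - 1) = ((N - 1 : ℕ) : ℤ) := by omega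
    rw [e, ← hN, zpow_natCast, zpow_natCast]
    refine Tendsto.congr (fun n => ?_) h
    rw [CWaux.FcwP_eq]
    all_goals congr!
  · intro ν hν
    lift ν to ℕ using hν
    have h := CWaux.countP_lim (p := p) (N := ν + 1)
      (fun q => ‖(q : ℚ_[p]) - 0‖ ≤ (p : ℝ) ^ (-(-(ν : ℤ))))
      (fun x => ¬ x.1.2 = PadicInt.toZModPow (ν + 1) 0 * x.1.1)
      (fun q hq => ?_ )
    rotate_left
    · rw [← CWaux.ball2 q hq 0, not_le]
      have hq0 : (q : ℚ_[p]) ≠ 0 := by exact_mod_cast hq.ne'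
      have hq1 : 0 < ‖(q : ℚ_[p])‖ := norm_pos_iff.2 hq0
      rw [Padic.norm_le_pow_iff_norm_lt_pow_add_one, sub_zero, PadicInt.coe_zero, sub_zero,
        norm_inv, neg_neg, zpow_neg, inv_lt_inv₀ (by positivity) hq1]
      push_cast
      rfl
    classical
    have hcpos : (Fintype.card (CWaux.X p (ν + 1)) : ℝ) ≠ 0 := by
      exact_mod_cast Fintype.card_ne_zero
    have hc := Fintype.card_subtype_compl
      (fun x : CWaux.X p (ν + 1) => x.1.2 = PadicInt.toZModPow (ν + 1) 0 * x.1.1)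
    have hle := Fintype.card_subtype_le
      (fun x : CWaux.X p (ν + 1) => x.1.2 = PadicInt.toZModPow (ν + 1) 0 * x.1.1)
    have hr := CWaux.ratio (p := p) (N := ν + 1)
    rw [← CWaux.card_Q2 (PadicInt.toZModPow (ν + 1) 0)] at hr
    have e : (Fintype.card {x : CWaux.X p (ν + 1) //
        ¬ x.1.2 = PadicInt.toZModPow (ν + 1) 0 * x.1.1} : ℝ) / Fintype.card (CWaux.X p (ν + 1))
        = 1 - 1 / ((p : ℝ) ^ ((ν : ℤ) + 1) + (p : ℝ) ^ (ν : ℤ)) := by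
      have hz : ((p : ℝ) ^ ((ν : ℤ) + 1) + (p : ℝ) ^ (ν : ℤ))
          = (p : ℝ) ^ (ν + 1) + (p : ℝ) ^ (ν + 1 - 1) := by
        rw [Nat.add_sub_cancel, zpow_natCast, ← zpow_natCast (p : ℝ) (ν + 1)]
        push_cast; rfl
      rw [hz, ← hr, eq_sub_iff_add_eq, ← add_div, div_eq_one_iff_eq hcpos]
      norm_cast
      convert Nat.sub_add_cancel hle using 2
    rw [← e]
    refine Tendsto.congr (fun n => ?_) (h.trans (le_of_eq ?_))
    · rw [CWaux.FcwP_eq]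
      all_goals congr!
    · congr!
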